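/- arXiv:2311.00955 — 2 statements merged into one kernel-verified Lean document; each statement's English description precedes it below -/
import Mathlib

section
/- Let ȳ : [0, ∞) → ℝ solve the steady state equation with ȳ(0) = κ > 0. Then the limit ȳ_∞ := lim_{r→∞} ȳ(r) exists, is finite, and satisfies ȳ_∞ < 0. Consequently ȳ has a unique zero R_κ ∈ (0, ∞), and the corresponding density and pressure satisfy ρ(r) = g(ȳ(r)) = 0 and p(r) = h(ȳ(r)) = 0 for all r > R_κ, i.e. the steady state has compact support [0, R_κ]. -/
/-!
As long as `y ≥ 0` the density is at least `1`, so `m(r) ≥ 4πr³/3`; together with `2 m(r) < r` this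
bounds the radius (`mfun_lower`), and `y` must vanish at some `R > 0`. The mass is then positive on
`(0, ∞)`, so `y` is strictly decreasing, which makes the zero unique and forces `g(y) = h(y) = 0`
beyond `R`. Outside `[0, R]` the mass is a constant `M`, and the equation integrates explicitly
(Schwarzschild exterior): `y(r) + ½ log (1 - 2M/r)` is constant on `[R, ∞)`. Hence
`y(r) → ½ log (1 - 2M/R) < 0`.
-/

open Real MeasureTheory Set Filter

/-- Hard phase density as a function of `ȳ`: `g(ȳ) = (e^{2ȳ}+1)/2` for `ȳ ≥ 0`, `0` otherwise. -/
noncomputable def gfun (x : ℝ) : ℝ := if 0 ≤ x then (Real.exp (2*x) + 1)/2 else 0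

/-- Hard phase pressure as a function of `ȳ`: `h(ȳ) = (e^{2ȳ}−1)/2` for `ȳ ≥ 0`, `0` otherwise. -/
noncomputable def hfun (x : ℝ) : ℝ := if 0 ≤ x then (Real.exp (2*x) - 1)/2 else 0

/-- Mass function `m(r) = 4π ∫₀^r s² g(ȳ(s)) ds`. -/
noncomputable def mfun (y : ℝ → ℝ) (r : ℝ) : ℝ :=
  4 * Real.pi * ∫ s in (0:ℝ)..r, s^2 * gfun (y s)

/-- Right hand side of the steady state equation
`ȳ′(r) = −(1/(1 − 2m(r)/r)) (m(r)/r² + 4π r p(r))` with `p = h ∘ ȳ`. -/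
noncomputable def steadyRHS (y : ℝ → ℝ) (r : ℝ) : ℝ :=
  -(1/(1 - 2 * mfun y r / r)) * (mfun y r / r^2 + 4 * Real.pi * r * hfun (y r))

lemma gfun_nonneg (x : ℝ) : 0 ≤ gfun x := by
  unfold gfun
  split_ifs <;> positivity

lemma hfun_nonneg (x : ℝ) : 0 ≤ hfun x := by
  unfold hfun
  split_ifs with h
  · have : 1 ≤ Real.exp (2*x) := Real.one_le_exp (by linarith)
    linarith
  · exact le_rfl

lemma one_le_gfun {x : ℝ} (hx : 0 ≤ x) : 1 ≤ gfun x := by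
  have : 1 ≤ Real.exp (2*x) := Real.one_le_exp (by linarith)
  rw [gfun, if_pos hx]
  linarith

lemma gfun_mono : Monotone gfun := by
  intro a b hab
  by_cases ha : 0 ≤ a
  · rw [gfun, gfun, if_pos ha, if_pos (ha.trans hab)]
    gcongr
  · rw [gfun, if_neg ha]
    exact gfun_nonneg b

lemma gfun_of_neg {x : ℝ} (hx : x < 0) : gfun x = 0 := if_neg (not_le.2 hx)

lemma hfun_of_nonpos {x : ℝ} (hx : x ≤ 0) : hfun x = 0 := by
  rcases hx.lt_or_eq with h | rfl
  · exact if_neg (not_le.2 h)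
  · simp [hfun]

lemma mfun_nonneg (y : ℝ → ℝ) {r : ℝ} (hr : 0 ≤ r) : 0 ≤ mfun y r := by
  refine mul_nonneg (by positivity) (intervalIntegral.integral_nonneg hr fun s _ => ?_)
  exact mul_nonneg (sq_nonneg s) (gfun_nonneg _)

/-- `gfun` jumps at `0`, so integrability of the density comes from monotonicity, not continuity. -/
lemma mass_intervalIntegrable {y : ℝ → ℝ} (hy : AntitoneOn y (Ici 0)) {a b : ℝ}
    (ha : 0 ≤ a) (hb : 0 ≤ b) :
    IntervalIntegrable (fun s => s^2 * gfun (y s)) volume a b := by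
  have hsub : uIcc a b ⊆ Ici 0 := fun s hs => (le_min ha hb).trans hs.1
  have hg : AntitoneOn (fun s => gfun (y s)) (uIcc a b) :=
    gfun_mono.comp_antitoneOn (hy.mono hsub)
  exact hg.intervalIntegrable.continuousOn_mul (by fun_prop)

lemma mfun_lower {y : ℝ → ℝ} (hy : AntitoneOn y (Ici 0)) {r : ℝ} (hr : 0 ≤ r) (hyr : 0 ≤ y r) :
    4 * Real.pi * (r^3 / 3) ≤ mfun y r := by
  have h : ∫ s in (0:ℝ)..r, s^2 ≤ ∫ s in (0:ℝ)..r, s^2 * gfun (y s) := by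
    refine intervalIntegral.integral_mono_on hr ((continuous_pow 2).intervalIntegrable 0 r)
      (mass_intervalIntegrable hy le_rfl hr) fun s hs => ?_
    exact le_mul_of_one_le_right (sq_nonneg s)
      (one_le_gfun (hyr.trans (hy hs.1 hr hs.2)))
  have h3 : ∫ s in (0:ℝ)..r, s^2 = r^3 / 3 := by
    rw [integral_pow]
    norm_num
  rw [h3] at h
  exact mul_le_mul_of_nonneg_left h (by positivity)

lemma mfun_add {y : ℝ → ℝ} (hy : AntitoneOn y (Ici 0)) {a b : ℝ} (ha : 0 ≤ a) (hb : 0 ≤ b) :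
    mfun y b = mfun y a + 4 * Real.pi * ∫ s in a..b, s^2 * gfun (y s) := by
  rw [mfun, mfun, ← mul_add, intervalIntegral.integral_add_adjacent_intervals
    (mass_intervalIntegrable hy le_rfl ha) (mass_intervalIntegrable hy ha hb)]

lemma mfun_mono {y : ℝ → ℝ} (hy : AntitoneOn y (Ici 0)) {a b : ℝ} (ha : 0 ≤ a) (hab : a ≤ b) :
    mfun y a ≤ mfun y b := by
  rw [mfun_add hy ha (ha.trans hab)]
  have : 0 ≤ ∫ s in a..b, s^2 * gfun (y s) :=
    intervalIntegral.integral_nonneg hab fun s _ => mul_nonneg (sq_nonneg s) (gfun_nonneg _)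
  have := mul_nonneg (by positivity : 0 ≤ 4 * Real.pi) this
  linarith

lemma mfun_eq_of_neg {y : ℝ → ℝ} (hy : AntitoneOn y (Ici 0)) {R r : ℝ} (hR : 0 ≤ R)
    (hRr : R ≤ r) (hneg : ∀ s > R, y s < 0) : mfun y r = mfun y R := by
  have h0 : ∫ s in R..r, s^2 * gfun (y s) = 0 := by
    refine intervalIntegral.integral_zero_ae (Eventually.of_forall fun s hs => ?_)
    rw [uIoc_of_le hRr] at hs
    rw [gfun_of_neg (hneg s hs.1), mul_zero]
  rw [mfun_add hy hR (hR.trans hRr), h0, mul_zero, add_zero]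

/-- `½ log (1 - 2M/s)` is an antiderivative of `-steadyRHS` in the vacuum region, where the mass is
the constant `M` and the pressure vanishes. -/
lemma hasDerivAt_exterior {M r : ℝ} (hr : 0 < r) (h : 0 < 1 - 2 * M / r) :
    HasDerivAt (fun s => Real.log (1 - 2 * M / s) / 2)
      ((1/(1 - 2 * M / r)) * (M / r^2)) r := by
  have h1 : HasDerivAt (fun s : ℝ => 1 - 2 * M / s) (2 * M / r^2) r := by
    have := ((hasDerivAt_inv hr.ne').const_mul (2 * M)).const_sub 1
    simp only [← div_eq_mul_inv] at this
    refine this.congr_deriv ?_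
    ring
  refine ((h1.log h.ne').div_const 2).congr_deriv ?_
  ring

lemma tendsto_exterior (M : ℝ) :
    Tendsto (fun s => Real.log (1 - 2 * M / s) / 2) atTop (nhds 0) := by
  have h1 : Tendsto (fun s : ℝ => 1 - 2 * M / s) atTop (nhds (1 - 0)) :=
    tendsto_const_nhds.sub (tendsto_const_nhds.div_atTop tendsto_id)
  rw [sub_zero] at h1
  simpa using (h1.log one_ne_zero).div_const 2

/-- Compact support of the steady state: along the global solution `ȳ` of the steady
state equation with `ȳ(0) = κ > 0`, the limit `ȳ_∞ = lim_{r→∞} ȳ(r)` exists, is finite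
and negative; consequently `ȳ` has a unique zero `R_κ > 0` and the density and pressure
vanish for `r > R_κ`. -/
theorem steady_state_compact_support (κ : ℝ) (hκ : 0 < κ) (y : ℝ → ℝ)
    (hcont : ContinuousOn y (Set.Ici 0)) (h0 : y 0 = κ)
    (hsol : ∀ r > (0:ℝ), 0 < 1 - 2 * mfun y r / r ∧ HasDerivAt y (steadyRHS y r) r) :
    ∃ yinf : ℝ, Filter.Tendsto y Filter.atTop (nhds yinf) ∧ yinf < 0 ∧
      ∃ Rk : ℝ, (0 < Rk ∧ y Rk = 0) ∧
        (∀ R' > (0:ℝ), y R' = 0 → R' = Rk) ∧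
        ∀ r > Rk, gfun (y r) = 0 ∧ hfun (y r) = 0 := by
  have hderiv : ∀ r > (0:ℝ), deriv y r = steadyRHS y r := fun r hr => (hsol r hr).2.deriv
  have hanti : AntitoneOn y (Ici 0) := by
    refine antitoneOn_of_deriv_nonpos (convex_Ici 0) hcont ?_ ?_
    · rw [interior_Ici]
      exact fun r hr => (hsol r hr).2.differentiableAt.differentiableWithinAt
    · rw [interior_Ici]
      intro r (hr : 0 < r)
      have hm := mfun_nonneg y hr.le
      have hh := hfun_nonneg (y r)
      have hd := (hsol r hr).1
      rw [hderiv r hr, steadyRHS, neg_mul, neg_nonpos]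
      positivity
  -- The radius `1` is already too large for `y ≥ 0`: then `2 m(1) ≥ 8π/3 > 1`.
  have hy1 : y 1 < 0 := by
    by_contra! h
    have hm := mfun_lower hanti zero_le_one h
    have hd := (hsol 1 one_pos).1
    have := Real.pi_gt_three
    norm_num at hm hd
    linarith
  obtain ⟨R, hRmem, hyR⟩ : ∃ R ∈ Icc (0:ℝ) 1, y R = 0 :=
    intermediate_value_Icc' zero_le_one (hcont.mono Icc_subset_Ici_self)
      ⟨hy1.le, by rw [h0]; exact hκ.le⟩
  have hR : 0 < R := by
    refine hRmem.1.lt_of_ne ?_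
    rintro rfl
    linarith
  have hpos : ∀ r > (0:ℝ), r ≤ R → 0 < mfun y r := by
    intro r hr hrR
    have hyr : 0 ≤ y r := hyR ▸ hanti hr.le hR.le hrR
    exact lt_of_lt_of_le (by positivity) (mfun_lower hanti hr.le hyr)
  have hmpos : ∀ r > (0:ℝ), 0 < mfun y r := by
    intro r hr
    rcases le_total r R with h | h
    · exact hpos r hr h
    · exact (hpos R hR le_rfl).trans_le (mfun_mono hanti hR.le h)
  have hstrict : StrictAntiOn y (Ici 0) := by
    refine strictAntiOn_of_deriv_neg (convex_Ici 0) hcont ?_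
    rw [interior_Ici]
    intro r (hr : 0 < r)
    have hm := hmpos r hr
    have hh := hfun_nonneg (y r)
    have hd := (hsol r hr).1
    rw [hderiv r hr, steadyRHS, neg_mul, neg_lt_zero]
    positivity
  have hneg : ∀ r > R, y r < 0 := fun r hr =>
    hyR ▸ hstrict (mem_Ici.2 hR.le) (mem_Ici.2 (hR.le.trans hr.le)) hr
  set M := mfun y R with hM
  have hmass : ∀ r ≥ R, mfun y r = M := fun r hr => mfun_eq_of_neg hanti hR.le hr hneg
  have hconst : ∀ r ≥ R,
      y r + Real.log (1 - 2 * M / r) / 2 = Real.log (1 - 2 * M / R) / 2 := by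
    have hD : ∀ r ≥ R, HasDerivAt (fun s => y s + Real.log (1 - 2 * M / s) / 2) 0 r := by
      intro r hr
      have hr0 : 0 < r := hR.trans_le hr
      obtain ⟨hd, hder⟩ := hsol r hr0
      have hyr : y r ≤ 0 := hyR ▸ hanti hR.le hr0.le hr
      rw [steadyRHS, hfun_of_nonpos hyr, hmass r hr] at hder
      rw [hmass r hr] at hd
      refine (hder.add (hasDerivAt_exterior hr0 hd)).congr_deriv ?_
      ring
    intro r hr
    have := constant_of_has_deriv_right_zero (a := R) (b := r)
      (fun s hs => (hD s hs.1).continuousAt.continuousWithinAt)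
      (fun s hs => (hD s hs.1).hasDerivWithinAt) r ⟨hr, le_rfl⟩
    simpa [hyR] using this
  refine ⟨Real.log (1 - 2 * M / R) / 2, ?_, ?_, R, ⟨hR, hyR⟩, ?_, ?_⟩
  · have h := (tendsto_exterior M).const_sub (Real.log (1 - 2 * M / R) / 2)
    rw [sub_zero] at h
    refine h.congr' ?_
    filter_upwards [eventually_ge_atTop R] with r hr
    linarith [hconst r hr]
  · have hd := (hsol R hR).1
    have hq : 0 < 2 * M / R := div_pos (mul_pos two_pos (hmpos R hR)) hR
    have := Real.log_neg hd (by linarith)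
    linarith
  · exact fun R' hR' hy' => hstrict.injOn hR'.le hR.le (hy'.trans hyR.symm)
  · exact fun r hr => ⟨gfun_of_neg (hneg r hr), hfun_of_nonpos (hneg r hr).le⟩
end

section
/- For every κ ≥ 0, the solution p*_κ of the massless pressure equation with initial data p*_κ(0) = e^{4κ} satisfies the scaling identity p*_κ(r) = e^{4κ} p*_0(e^{2κ} r) for all r ≥ 0 in its interval of existence, where p*_0 is the solution with p*_0(0) = 1. -/
/-!
The massless equation is invariant under the rescaling `p ↦ a² p(a ·)` (`rhsStar_rescale`), so the
claim reduces to uniqueness for the initial value problem on `[0, R]`.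

Uniqueness needs the denominator `D(r) = 1 - (8π/r) ∫₀^r s² p` to stay positive (`denStar_pos`).
At a first zero `r₁` one has `D'(r₁) ≤ 0`, and `D'(r₁) = 1/r₁ - 8π r₁ p(r₁)`, so `p(r₁) > 0`; then
`p' → -∞` as `r ↑ r₁`, which is incompatible with the differentiability of `p` at `r₁`.
On `[0, b]` with `b < R`, `D` is therefore bounded below by a positive constant, and the right hand
side is Lipschitz in `p` for the sup norm over `[0, r]` (`rhs_algebraic_lipschitz`), the singular
weight being harmless because `∫₀^r s² p` is of order `r³`. A Gronwall argument with the weight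
`exp (-C r)` concludes (`eqOn_of_denStar_lower`).
-/

open Real MeasureTheory Set

/-- Hard phase density in terms of pressure: `S(p) = p + 1` (since `ρ = p + 1`). -/
noncomputable def Shard (x : ℝ) : ℝ := x + 1

/-- Right hand side of the hard phase steady state pressure equation
`p′(r) = −((S(p)+p)/(1 − (8π/r)∫₀^r s²S(p)))((4π/r²)∫₀^r s²S(p) + 4π r p)`. -/
noncomputable def rhsHard (p : ℝ → ℝ) (r : ℝ) : ℝ :=
  -((Shard (p r) + p r) / (1 - (8 * Real.pi / r) * ∫ s in (0:ℝ)..r, s^2 * Shard (p s))) *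
    ((4 * Real.pi / r^2) * (∫ s in (0:ℝ)..r, s^2 * Shard (p s)) + 4 * Real.pi * r * p r)

/-- Right hand side of the massless pressure equation (with `S*(p) = p`):
`p′(r) = −(2p/(1 − (8π/r)∫₀^r s²p))((4π/r²)∫₀^r s²p + 4π r p)`. -/
noncomputable def rhsStar (p : ℝ → ℝ) (r : ℝ) : ℝ :=
  -((2 * p r) / (1 - (8 * Real.pi / r) * ∫ s in (0:ℝ)..r, s^2 * p s)) *
    ((4 * Real.pi / r^2) * (∫ s in (0:ℝ)..r, s^2 * p s) + 4 * Real.pi * r * p r)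

/-! ### Scale invariance -/

/-- The integral `∫₀^r s² p(s) ds`, i.e. the mass function up to the factor `4π`. -/
noncomputable def massInt (p : ℝ → ℝ) (r : ℝ) : ℝ := ∫ s in (0:ℝ)..r, s^2 * p s

/-- The denominator `1 - (8π/r) ∫₀^r s² p` of the massless pressure equation. Since `8π/0 = 0` by
convention, its value at `r = 0` is `1`, which is also its limit there. -/
noncomputable def denStar (p : ℝ → ℝ) (r : ℝ) : ℝ := 1 - (8 * Real.pi / r) * massInt p r

lemma rhsStar_eq (p : ℝ → ℝ) (r : ℝ) :
    rhsStar p r = -((2 * p r) / denStar p r) *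
      ((4 * Real.pi / r^2) * massInt p r + 4 * Real.pi * r * p r) := rfl

lemma massInt_rescale (p : ℝ → ℝ) {a : ℝ} (ha : 0 < a) (r : ℝ) :
    massInt (fun s => a^2 * p (a * s)) r = massInt p (a * r) / a := by
  have h := intervalIntegral.integral_comp_mul_left (a := 0) (b := r)
    (fun t => t^2 * p t) ha.ne'
  simp only [mul_zero, smul_eq_mul] at h
  unfold massInt
  rw [div_eq_inv_mul, ← h]
  congr 1
  ext s
  ring

/-- If `p` solves the massless equation, so does `r ↦ a² p(a r)`. -/
lemma rhsStar_rescale (p : ℝ → ℝ) {a : ℝ} (ha : 0 < a) {r : ℝ} (hr : 0 < r) :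
    rhsStar (fun s => a^2 * p (a * s)) r = a^3 * rhsStar p (a * r) := by
  have hD : denStar (fun s => a^2 * p (a * s)) r = denStar p (a * r) := by
    unfold denStar
    rw [massInt_rescale p ha]
    field_simp
  rw [rhsStar_eq, rhsStar_eq, hD, massInt_rescale p ha]
  have : (4 * Real.pi / r^2) * (massInt p (a * r) / a) + 4 * Real.pi * r * (a^2 * p (a * r))
      = a * ((4 * Real.pi / (a*r)^2) * massInt p (a * r) + 4 * Real.pi * (a * r) * p (a * r)) := by
    field_simp
  rw [this]
  ring

/-! ### Positivity of the denominator -/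

section solution

variable {p : ℝ → ℝ} {R : ℝ}

lemma intervalIntegrable_sq_mul (hp : ContinuousOn p (Icc 0 R)) {x : ℝ} (hx : x ∈ Icc 0 R) :
    IntervalIntegrable (fun s => s^2 * p s) volume 0 x := by
  apply ContinuousOn.intervalIntegrable
  rw [uIcc_of_le hx.1]
  exact (by fun_prop : ContinuousOn (fun s : ℝ => s^2) (Icc 0 x)).mul
    (hp.mono (Icc_subset_Icc_right hx.2))

/-- The crude bound `|∫₀^x s² p| ≤ K x³`, which tames the singular factors `1/r` and `1/r²`. -/
lemma abs_massInt_le {K x : ℝ} (hx : 0 ≤ x)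
    (hK : ∀ s ∈ Icc 0 x, |p s| ≤ K) : |massInt p x| ≤ K * x^3 := by
  have h := intervalIntegral.norm_integral_le_of_norm_le_const (a := 0) (b := x)
    (f := fun s => s^2 * p s) (C := x^2 * K) (by
      intro s hs
      rw [uIoc_of_le hx] at hs
      rw [Real.norm_eq_abs, abs_mul, abs_of_nonneg (sq_nonneg s)]
      have h1 : s^2 ≤ x^2 := pow_le_pow_left₀ hs.1.le hs.2 2
      exact mul_le_mul h1 (hK s ⟨hs.1.le, hs.2⟩) (abs_nonneg _) (sq_nonneg x))
  rw [Real.norm_eq_abs, sub_zero, abs_of_nonneg hx] at h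
  unfold massInt
  linarith [h, (by ring : x^2 * K * x = K * x^3)]

lemma hasDerivAt_massInt (hp : ContinuousOn p (Icc 0 R)) {x : ℝ} (hx : x ∈ Ioo 0 R) :
    HasDerivAt (massInt p) (x^2 * p x) x := by
  have hcont : ContinuousOn (fun s => s^2 * p s) (Ioo 0 R) :=
    (by fun_prop : ContinuousOn (fun s : ℝ => s^2) (Ioo 0 R)).mul (hp.mono Ioo_subset_Icc_self)
  exact intervalIntegral.integral_hasDerivAt_right
    (intervalIntegrable_sq_mul hp (Ioo_subset_Icc_self hx))
    (hcont.stronglyMeasurableAtFilter isOpen_Ioo x hx)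
    (hcont.continuousAt (isOpen_Ioo.mem_nhds hx))

lemma hasDerivAt_denStar (hp : ContinuousOn p (Icc 0 R)) {x : ℝ} (hx : x ∈ Ioo 0 R) :
    HasDerivAt (denStar p) (8 * Real.pi / x^2 * massInt p x - 8 * Real.pi * x * p x) x := by
  have hx0 : x ≠ 0 := hx.1.ne'
  have h1 : HasDerivAt (fun r : ℝ => 8 * Real.pi / r) (-(8 * Real.pi) / x^2) x := by
    exact ((hasDerivAt_const x (8 * Real.pi)).div (hasDerivAt_id x) hx0).congr_deriv (by simp)
  have h2 := (h1.mul (hasDerivAt_massInt hp hx)).const_sub 1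
  refine HasDerivAt.congr_deriv h2 ?_
  field_simp
  ring

lemma denStar_zero (p : ℝ → ℝ) : denStar p 0 = 1 := by simp [denStar]

lemma continuousOn_denStar (hp : ContinuousOn p (Icc 0 R)) :
    ContinuousOn (denStar p) (Ico 0 R) := by
  intro x hx
  rcases hx.1.eq_or_lt with h0 | h0
  · subst h0
    obtain ⟨K, hK⟩ := isCompact_Icc.exists_bound_of_continuousOn hp
    have hlim : Filter.Tendsto (fun x : ℝ => 8 * Real.pi * K * x^2) (nhdsWithin 0 (Ico 0 R))
        (nhds 0) := by
      have : Continuous (fun x : ℝ => 8 * Real.pi * K * x^2) := by fun_prop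
      have h := this.continuousWithinAt (s := Ico 0 R) (x := 0)
      simpa [ContinuousWithinAt] using h
    unfold ContinuousWithinAt
    rw [denStar_zero, tendsto_iff_norm_sub_tendsto_zero]
    refine squeeze_zero' (Filter.Eventually.of_forall fun _ => norm_nonneg _) ?_ hlim
    filter_upwards [self_mem_nhdsWithin] with y hy
    rcases hy.1.eq_or_lt with hy0 | hy0
    · subst hy0
      simp [denStar]
    · have hb := abs_massInt_le (p := p) (K := K) hy.1
        (fun s hs => hK s ⟨hs.1, hs.2.trans hy.2.le⟩)
      have : denStar p y - 1 = -(8 * Real.pi / y * massInt p y) := by unfold denStar; ring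
      rw [this, norm_neg, Real.norm_eq_abs, abs_mul, abs_of_pos (by positivity)]
      calc 8 * Real.pi / y * |massInt p y| ≤ 8 * Real.pi / y * (K * y^3) := by gcongr
        _ = 8 * Real.pi * K * y^2 := by field_simp
  · exact (hasDerivAt_denStar hp ⟨h0, hx.2⟩).continuousAt.continuousWithinAt

/-- The denominator never vanishes inside the interval of existence. -/
lemma denStar_pos (hp : ContinuousOn p (Icc 0 R))
    (hode : ∀ r ∈ Ioo (0:ℝ) R, HasDerivAt p (rhsStar p r) r) :
    ∀ c ∈ Ico 0 R, 0 < denStar p c := by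
  intro c hc
  by_contra! hneg
  have hDc : ContinuousOn (denStar p) (Icc 0 c) :=
    (continuousOn_denStar hp).mono (fun x hx => ⟨hx.1, hx.2.trans_lt hc.2⟩)
  have hcpt : IsCompact (Icc 0 c ∩ denStar p ⁻¹' Iic 0) :=
    isCompact_Icc.of_isClosed_subset
      (hDc.preimage_isClosed_of_isClosed isClosed_Icc isClosed_Iic) inter_subset_left
  obtain ⟨r, ⟨hrc, hDr⟩, hmin⟩ := hcpt.exists_isLeast ⟨c, ⟨hc.1, le_rfl⟩, hneg⟩
  have hDr' : denStar p r ≤ 0 := hDr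
  have hr0 : 0 < r := by
    rcases hrc.1.eq_or_lt with h | h
    · rw [← h, denStar_zero] at hDr'
      linarith
    · exact h
  have hrR : r ∈ Ioo 0 R := ⟨hr0, hrc.2.trans_lt hc.2⟩
  have hbefore : ∀ x ∈ Ioo 0 r, 0 < denStar p x := by
    intro x hx
    by_contra! h
    exact absurd (hmin ⟨⟨hx.1.le, hx.2.le.trans hrc.2⟩, h⟩) (not_le.mpr hx.2)
  have hleft : ∀ᶠ x in nhdsWithin r (Iio r), x ∈ Ioo 0 r := Ioo_mem_nhdsLT hr0
  have hDd := hasDerivAt_denStar hp hrR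
  have hDlim : Filter.Tendsto (denStar p) (nhdsWithin r (Iio r)) (nhds (denStar p r)) :=
    hDd.continuousAt.continuousWithinAt
  have hDzero : denStar p r = 0 :=
    le_antisymm hDr' (ge_of_tendsto hDlim (hleft.mono fun x hx => (hbefore x hx).le))
  have hmass : 8 * Real.pi * massInt p r = r := by
    unfold denStar at hDzero
    field_simp at hDzero
    linarith
  have hD'nonpos : 8 * Real.pi / r^2 * massInt p r - 8 * Real.pi * r * p r ≤ 0 := by
    have hs := (hasDerivAt_iff_tendsto_slope_left_right.mp hDd).1
    refine le_of_tendsto hs ?_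
    filter_upwards [hleft] with x hx
    rw [slope_def_field, hDzero, sub_zero]
    exact div_nonpos_of_nonneg_of_nonpos (hbefore x hx).le (by linarith [hx.2])
  have hmpos : 0 < massInt p r := by
    by_contra! h
    nlinarith [Real.pi_pos]
  have hppos : 0 < p r := by
    have h1 : 0 < 8 * Real.pi / r^2 * massInt p r := by positivity
    have h2 : 0 < (8 * Real.pi * r) * p r := by linarith
    exact pos_of_mul_pos_right h2 (by positivity)
  -- The numerator has a positive limit at `r`, whereas the denominator tends to `0` from above.
  have hpc : ContinuousAt p r := (hode r hrR).continuousAt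
  have hMc : ContinuousAt (massInt p) r := (hasDerivAt_massInt hp hrR).continuousAt
  have hQc : ContinuousAt (fun x => 2 * p x *
      ((4 * Real.pi / x^2) * massInt p x + 4 * Real.pi * x * p x) - denStar p x) r := by
    have h2 : ContinuousAt (fun x : ℝ => 4 * Real.pi / x^2) r :=
      continuousAt_const.div (by fun_prop) (by positivity)
    have h3 := hDd.continuousAt
    fun_prop
  have hQpos : ∀ᶠ x in nhds r, 0 < 2 * p x *
      ((4 * Real.pi / x^2) * massInt p x + 4 * Real.pi * x * p x) - denStar p x := by
    refine hQc.eventually (lt_mem_nhds ?_)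
    simp only [hDzero]
    have : 0 < 2 * p r * ((4 * Real.pi / r^2) * massInt p r + 4 * Real.pi * r * p r) := by
      positivity
    linarith
  obtain ⟨l, hl, hQ⟩ := (mem_nhdsLT_iff_exists_Ioo_subset' hr0).mp
    (mem_nhdsWithin_of_mem_nhds hQpos : _ ∈ nhdsWithin r (Iio r))
  have hslope : ∀ᶠ x in nhdsWithin r (Iio r), slope p r x ≤ -1 := by
    have hl' : ∀ᶠ x in nhdsWithin r (Iio r), x ∈ Ioo l r := Ioo_mem_nhdsLT hl
    filter_upwards [hleft, hl'] with x hx hxl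
    obtain ⟨ξ, hξ, hξe⟩ := exists_hasDerivAt_eq_slope p (rhsStar p) hx.2
      (hp.mono (Icc_subset_Icc hx.1.le hrR.2.le))
      (fun y hy => hode y ⟨hx.1.trans hy.1, hy.2.trans hrR.2⟩)
    rw [slope_comm, slope_def_field, ← hξe, rhsStar_eq]
    have hDξ := hbefore ξ ⟨hx.1.trans hξ.1, hξ.2⟩
    have hq : 0 < 2 * p ξ *
      ((4 * Real.pi / ξ^2) * massInt p ξ + 4 * Real.pi * ξ * p ξ) - denStar p ξ :=
      hQ ⟨hxl.1.trans hξ.1, hξ.2⟩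
    have : 1 ≤ 2 * p ξ * ((4 * Real.pi / ξ^2) * massInt p ξ + 4 * Real.pi * ξ * p ξ)
        / denStar p ξ := by
      rw [le_div_iff₀ hDξ]
      linarith
    rw [neg_mul, div_mul_eq_mul_div]
    linarith
  have hp' := le_of_tendsto (hasDerivAt_iff_tendsto_slope_left_right.mp (hode r hrR)).1 hslope
  -- With the convention `x / 0 = 0` the equation forces `p'(r) = 0`.
  rw [rhsStar_eq, hDzero] at hp'
  norm_num at hp'

end solution

/-! ### Uniqueness -/

/-- Lipschitz estimate for the right hand side written in terms of `x`, `p` and the rescaled mass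
`u = x⁻³ ∫₀^x s² p`. -/
lemma rhs_algebraic_lipschitz {x b K δ S p₁ p₂ u₁ u₂ D₁ D₂ : ℝ} (hx : 0 ≤ x) (hxb : x ≤ b)
    (hδ : 0 < δ) (hp₁ : |p₁| ≤ K) (hp₂ : |p₂| ≤ K) (hu₁ : |u₁| ≤ K) (hu₂ : |u₂| ≤ K)
    (hp : |p₁ - p₂| ≤ S) (hu : |u₁ - u₂| ≤ S) (hD₁ : δ ≤ D₁) (hD₂ : δ ≤ D₂)
    (hD : D₂ - D₁ = 8 * Real.pi * x^2 * (u₁ - u₂)) :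
    |8 * Real.pi * x * (p₁ * (u₁ + p₁)) / D₁ - 8 * Real.pi * x * (p₂ * (u₂ + p₂)) / D₂|
      ≤ (8 * Real.pi * b * (4 * K) / δ
          + 8 * Real.pi * b * (2 * K^2) * (8 * Real.pi * b^2) / (δ * δ)) * S := by
  have hK : 0 ≤ K := (abs_nonneg _).trans hp₁
  have hS : 0 ≤ S := (abs_nonneg _).trans hp
  have hb : 0 ≤ b := hx.trans hxb
  have hD₁' : 0 < D₁ := hδ.trans_le hD₁
  have hD₂' : 0 < D₂ := hδ.trans_le hD₂
  have hsplit : 8 * Real.pi * x * (p₁ * (u₁ + p₁)) / D₁ - 8 * Real.pi * x * (p₂ * (u₂ + p₂)) / D₂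
      = 8 * Real.pi * x * ((p₁ - p₂) * (u₁ + p₁) + p₂ * ((u₁ - u₂) + (p₁ - p₂))) / D₁
        + 8 * Real.pi * x * (p₂ * (u₂ + p₂)) * (8 * Real.pi * x^2 * (u₁ - u₂)) / (D₁ * D₂) := by
    rw [← hD]
    field_simp
    ring
  have hA : |(p₁ - p₂) * (u₁ + p₁) + p₂ * ((u₁ - u₂) + (p₁ - p₂))| ≤ 4 * K * S := by
    calc _ ≤ |p₁ - p₂| * |u₁ + p₁| + |p₂| * |(u₁ - u₂) + (p₁ - p₂)| := by
          rw [← abs_mul, ← abs_mul]; exact abs_add_le _ _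
      _ ≤ S * (K + K) + K * (S + S) := by
          gcongr
          · exact (abs_add_le _ _).trans (add_le_add hu₁ hp₁)
          · exact (abs_add_le _ _).trans (add_le_add hu hp)
      _ = 4 * K * S := by ring
  have hB : |p₂ * (u₂ + p₂)| ≤ 2 * K^2 := by
    rw [abs_mul]
    calc _ ≤ K * (K + K) := by
          gcongr
          exact (abs_add_le _ _).trans (add_le_add hu₂ hp₂)
      _ = 2 * K^2 := by ring
  rw [hsplit]
  refine (abs_add_le _ _).trans ?_
  rw [add_mul]
  refine add_le_add ?_ ?_
  · rw [abs_div, abs_mul, abs_of_pos hD₁', abs_of_nonneg (by positivity : 0 ≤ 8 * Real.pi * x)]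
    calc _ ≤ 8 * Real.pi * b * (4 * K * S) / δ := by gcongr
      _ = _ := by ring
  · rw [abs_div, abs_mul, abs_mul, abs_mul (8 * Real.pi * x^2), abs_of_pos (mul_pos hD₁' hD₂'),
      abs_of_nonneg (by positivity : 0 ≤ 8 * Real.pi * x),
      abs_of_nonneg (by positivity : 0 ≤ 8 * Real.pi * x^2)]
    calc _ ≤ 8 * Real.pi * b * (2 * K^2) * (8 * Real.pi * b^2 * S) / (δ * δ) := by gcongr
      _ = _ := by ring

/-- Two solutions on `[0, b]` with the same initial value agree, provided both denominators are
bounded away from zero. -/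
lemma eqOn_of_denStar_lower {p q : ℝ → ℝ} {b δ : ℝ} (hb : 0 < b) (hδ : 0 < δ)
    (hp : ContinuousOn p (Icc 0 b)) (hq : ContinuousOn q (Icc 0 b))
    (hpode : ∀ r ∈ Ioo (0:ℝ) b, HasDerivAt p (rhsStar p r) r)
    (hqode : ∀ r ∈ Ioo (0:ℝ) b, HasDerivAt q (rhsStar q r) r)
    (hpD : ∀ r ∈ Ioo (0:ℝ) b, δ ≤ denStar p r) (hqD : ∀ r ∈ Ioo (0:ℝ) b, δ ≤ denStar q r)
    (h0 : p 0 = q 0) : EqOn p q (Icc 0 b) := by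
  obtain ⟨K₁, hK₁⟩ := isCompact_Icc.exists_bound_of_continuousOn hp
  obtain ⟨K₂, hK₂⟩ := isCompact_Icc.exists_bound_of_continuousOn hq
  set K := max K₁ K₂
  have hpK : ∀ s ∈ Icc 0 b, |p s| ≤ K := fun s hs => (hK₁ s hs).trans (le_max_left _ _)
  have hqK : ∀ s ∈ Icc 0 b, |q s| ≤ K := fun s hs => (hK₂ s hs).trans (le_max_right _ _)
  have hK : 0 ≤ K := (abs_nonneg _).trans (hpK 0 ⟨le_rfl, hb.le⟩)
  set C := 8 * Real.pi * b * (4 * K) / δ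
          + 8 * Real.pi * b * (2 * K^2) * (8 * Real.pi * b^2) / (δ * δ) with hC
  have hC0 : 0 ≤ C := by positivity
  have hdiff : ContinuousOn (fun x => p x - q x) (Icc 0 b) := hp.sub hq
  -- `M` is the maximum over `[0, b]` of the weighted difference `|p - q| exp (-C x)`.
  obtain ⟨z, hz, hzmax⟩ := isCompact_Icc.exists_isMaxOn (nonempty_Icc.mpr hb.le)
    (f := fun x => |p x - q x| * Real.exp (-(C * x)))
    (hdiff.abs.mul (by fun_prop))
  set M := |p z - q z| * Real.exp (-(C * z)) with hM
  have hM0 : 0 ≤ M := by positivity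
  have hle : ∀ x ∈ Icc 0 b, |p x - q x| ≤ M * Real.exp (C * x) := by
    intro x hx
    have h : |p x - q x| * Real.exp (-(C * x)) ≤ M := hzmax hx
    rw [Real.exp_neg, ← div_eq_mul_inv, div_le_iff₀ (Real.exp_pos _)] at h
    exact h
  have hrhs : ∀ x ∈ Ioo 0 b, |rhsStar p x - rhsStar q x| ≤ C * (M * Real.exp (C * x)) := by
    intro x hx
    have hx0 : 0 < x := hx.1
    have hsub : Icc 0 x ⊆ Icc 0 b := Icc_subset_Icc_right hx.2.le
    have hform : ∀ f : ℝ → ℝ, rhsStar f x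
        = -(8 * Real.pi * x * (f x * (massInt f x / x^3 + f x)) / denStar f x) := by
      intro f
      rw [rhsStar_eq, neg_mul, div_mul_eq_mul_div]
      congr 2
      field_simp
      ring
    have hu : ∀ f : ℝ → ℝ, ∀ L : ℝ, (∀ s ∈ Icc 0 x, |f s| ≤ L) → |massInt f x / x^3| ≤ L := by
      intro f L hL
      rw [abs_div, abs_of_pos (by positivity : 0 < x^3), div_le_iff₀ (by positivity)]
      exact abs_massInt_le hx0.le hL
    have hmsub : massInt (fun s => p s - q s) x = massInt p x - massInt q x := by
      unfold massInt
      rw [← intervalIntegral.integral_sub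
        (intervalIntegrable_sq_mul hp (Ioo_subset_Icc_self hx))
        (intervalIntegrable_sq_mul hq (Ioo_subset_Icc_self hx))]
      congr 1
      ext s
      ring
    have hS : ∀ s ∈ Icc 0 x, |p s - q s| ≤ M * Real.exp (C * x) := by
      intro s hs
      refine (hle s (hsub hs)).trans ?_
      gcongr
      exact hs.2
    rw [hform p, hform q, ← abs_neg]
    have key := rhs_algebraic_lipschitz (S := M * Real.exp (C * x)) (D₁ := denStar p x)
      (D₂ := denStar q x) (u₁ := massInt p x / x^3)
      (u₂ := massInt q x / x^3) hx0.le hx.2.le hδ (hpK x (Ioo_subset_Icc_self hx))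
      (hqK x (Ioo_subset_Icc_self hx)) (hu p K fun s hs => hpK s (hsub hs))
      (hu q K fun s hs => hqK s (hsub hs)) (hS x ⟨hx0.le, le_rfl⟩)
      (by rw [← sub_div, ← hmsub]; exact hu _ _ hS)
      (hpD x hx) (hqD x hx) (by unfold denStar; field_simp; ring)
    convert key using 2
    ring
  -- Comparing with `M exp (C x)` on `[0, b]` yields `|p - q| ≤ M (exp (C x) - 1)`.
  have hexpd : ∀ x : ℝ, HasDerivAt (fun x => M * Real.exp (C * x)) (C * (M * Real.exp (C * x))) x := by
    intro x
    have := (((hasDerivAt_id x).const_mul C).exp).const_mul M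
    exact this.congr_deriv (by simp; ring)
  have hmono₁ : AntitoneOn (fun x => (p x - q x) - M * Real.exp (C * x)) (Icc 0 b) := by
    refine antitoneOn_of_hasDerivWithinAt_nonpos (convex_Icc 0 b) (hdiff.sub (by fun_prop))
      (f' := fun x => (rhsStar p x - rhsStar q x) - C * (M * Real.exp (C * x))) ?_ ?_
    · intro x hx
      rw [interior_Icc] at hx
      exact (((hpode x hx).sub (hqode x hx)).sub (hexpd x)).hasDerivWithinAt
    · intro x hx
      rw [interior_Icc] at hx
      linarith [(abs_le.mp (hrhs x hx)).2]
  have hmono₂ : MonotoneOn (fun x => (p x - q x) + M * Real.exp (C * x)) (Icc 0 b) := by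
    refine monotoneOn_of_hasDerivWithinAt_nonneg (convex_Icc 0 b) (hdiff.add (by fun_prop))
      (f' := fun x => (rhsStar p x - rhsStar q x) + C * (M * Real.exp (C * x))) ?_ ?_
    · intro x hx
      rw [interior_Icc] at hx
      exact (((hpode x hx).sub (hqode x hx)).add (hexpd x)).hasDerivWithinAt
    · intro x hx
      rw [interior_Icc] at hx
      linarith [(abs_le.mp (hrhs x hx)).1]
  have h0mem : (0:ℝ) ∈ Icc 0 b := ⟨le_rfl, hb.le⟩
  have hz₁ := hmono₁ h0mem hz hz.1
  have hz₂ := hmono₂ h0mem hz hz.1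
  simp only [h0, sub_self, mul_zero, Real.exp_zero, mul_one] at hz₁ hz₂
  have hzabs : |p z - q z| ≤ M * Real.exp (C * z) - M :=
    abs_le.mpr ⟨by linarith, by linarith⟩
  have hzeq : M * Real.exp (C * z) = |p z - q z| := by
    rw [hM, mul_assoc, ← Real.exp_add]
    simp
  have hMz : M = 0 := by linarith
  intro x hx
  have h := hle x hx
  rw [hMz, zero_mul] at h
  exact sub_eq_zero.mp (abs_nonpos_iff.mp h)

lemma denStar_lower {p : ℝ → ℝ} {R b : ℝ} (hb : 0 ≤ b) (hbR : b < R)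
    (hp : ContinuousOn p (Icc 0 R))
    (hode : ∀ r ∈ Ioo (0:ℝ) R, HasDerivAt p (rhsStar p r) r) :
    ∃ δ, 0 < δ ∧ ∀ r ∈ Icc 0 b, δ ≤ denStar p r := by
  have hsub : Icc 0 b ⊆ Ico 0 R := fun x hx => ⟨hx.1, hx.2.trans_lt hbR⟩
  obtain ⟨z, hz, hmin⟩ := isCompact_Icc.exists_isMinOn (nonempty_Icc.mpr hb)
    ((continuousOn_denStar hp).mono hsub)
  exact ⟨denStar p z, denStar_pos hp hode z (hsub hz), fun r hr => hmin hr⟩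

/-- Uniqueness for the massless pressure equation on `[0, R]`. -/
lemma massless_unique {p q : ℝ → ℝ} {R : ℝ} (hR : 0 < R)
    (hp : ContinuousOn p (Icc 0 R)) (hq : ContinuousOn q (Icc 0 R))
    (hpode : ∀ r ∈ Ioo (0:ℝ) R, HasDerivAt p (rhsStar p r) r)
    (hqode : ∀ r ∈ Ioo (0:ℝ) R, HasDerivAt q (rhsStar q r) r)
    (h0 : p 0 = q 0) : EqOn p q (Icc 0 R) := by
  have hmain : EqOn p q (Ico 0 R) := by
    intro b hb
    rcases hb.1.eq_or_lt with hb0 | hb0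
    · rw [← hb0, h0]
    obtain ⟨δ₁, hδ₁, hD₁⟩ := denStar_lower hb.1 hb.2 hp hpode
    obtain ⟨δ₂, hδ₂, hD₂⟩ := denStar_lower hb.1 hb.2 hq hqode
    have hI : Icc 0 b ⊆ Icc 0 R := Icc_subset_Icc_right hb.2.le
    exact eqOn_of_denStar_lower hb0 (lt_min hδ₁ hδ₂) (hp.mono hI) (hq.mono hI)
      (fun r hr => hpode r ⟨hr.1, hr.2.trans hb.2⟩) (fun r hr => hqode r ⟨hr.1, hr.2.trans hb.2⟩)
      (fun r hr => (min_le_left _ _).trans (hD₁ r (Ioo_subset_Icc_self hr)))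
      (fun r hr => (min_le_right _ _).trans (hD₂ r (Ioo_subset_Icc_self hr))) h0 ⟨hb.1, le_rfl⟩
  exact hmain.of_subset_closure hp hq Ico_subset_Icc_self (closure_Ico hR.ne).ge

/-! ### The scaling identity -/

/-- Scaling identity for the massless pressure solutions:
`p*_κ(r) = e^{4κ} p*_0(e^{2κ} r)` on the common interval of existence. -/
theorem massless_pressure_scaling (κ : ℝ) (hκ : 0 ≤ κ) (R : ℝ) (hR : 0 < R)
    (q p0 : ℝ → ℝ)
    (hp0init : p0 0 = 1) (hqinit : q 0 = Real.exp (4*κ))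
    (hp0cont : ContinuousOn p0 (Set.Icc 0 (Real.exp (2*κ) * R)))
    (hp0 : ∀ r ∈ Set.Ioo (0:ℝ) (Real.exp (2*κ) * R), HasDerivAt p0 (rhsStar p0 r) r)
    (hqcont : ContinuousOn q (Set.Icc 0 R))
    (hq : ∀ r ∈ Set.Ioo (0:ℝ) R, HasDerivAt q (rhsStar q r) r) :
    ∀ r ∈ Set.Icc (0:ℝ) R, q r = Real.exp (4*κ) * p0 (Real.exp (2*κ) * r) := by
  have hsq : Real.exp (4*κ) = Real.exp (2*κ) ^ 2 := by
    rw [← Real.exp_nat_mul]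
    congr 1
    push_cast
    ring
  rw [hsq] at hqinit ⊢
  have ha : 0 < Real.exp (2*κ) := Real.exp_pos _
  set a := Real.exp (2*κ)
  refine massless_unique (q := fun r => a^2 * p0 (a * r)) hR hqcont ?_ hq ?_ ?_
  · refine continuousOn_const.mul (hp0cont.comp (by fun_prop) ?_)
    intro x hx
    exact ⟨mul_nonneg ha.le hx.1, mul_le_mul_of_nonneg_left hx.2 ha.le⟩
  · intro r hr
    rw [rhsStar_rescale p0 ha hr.1]
    have h1 := hp0 (a * r) ⟨mul_pos ha hr.1, mul_lt_mul_of_pos_left hr.2 ha⟩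
    have h2 := (h1.comp r ((hasDerivAt_id r).const_mul a)).const_mul (a^2)
    exact h2.congr_deriv (by ring)
  · simp [hqinit, hp0init]
end
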